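/- (Special case of Forman, Theorem 2.5) Let K be a finite abstract simplicial complex and let V be a gradient vector field on K (a discrete vector field admitting no nontrivial closed V-path) whose set of critical simplices (simplices belonging to no pair of V) consists of exactly one 0-simplex. Then K is collapsible: there is a finite sequence of elementary collapses reducing K to that single vertex, where an elementary collapse removes from the current complex a pair of simplices (α, β) with α ⋖ β such that β is the unique simplex of the current complex properly containing α. -/

import Mathlib

/-- An abstract simplicial complex on a vertex type `V`: a set of nonempty finite
subsets (simplices) closed under passing to nonempty subsets. -/
def IsComplex {V : Type*} (K : Set (Finset V)) : Prop :=
  (∀ σ ∈ K, σ.Nonempty) ∧ ∀ σ ∈ K, ∀ τ : Finset V, τ ⊆ σ → τ.Nonempty → τ ∈ K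

/-- `α ⋖ β` : `α` is a codimension-one face of `β`. -/
def CodimOneFace {V : Type*} (a b : Finset V) : Prop :=
  a ⊆ b ∧ b.card = a.card + 1

/-- A discrete Morse function on `K`: for every simplex `σ ∈ K`, at most one
codimension-one coface with no larger value, and at most one codimension-one face
with no smaller value. -/
def IsDiscreteMorse {V : Type*} (K : Set (Finset V)) (f : Finset V → ℝ) : Prop :=
  ∀ σ ∈ K,
    {β | β ∈ K ∧ CodimOneFace σ β ∧ f β ≤ f σ}.Subsingleton ∧
    {a | a ∈ K ∧ CodimOneFace a σ ∧ f σ ≤ f a}.Subsingleton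

/-- A simplex `σ` is critical for `f` if both exceptional sets are empty. -/
def IsCriticalSimplex {V : Type*} (K : Set (Finset V)) (f : Finset V → ℝ)
    (σ : Finset V) : Prop :=
  σ ∈ K ∧
    {β | β ∈ K ∧ CodimOneFace σ β ∧ f β ≤ f σ} = ∅ ∧
    {a | a ∈ K ∧ CodimOneFace a σ ∧ f σ ≤ f a} = ∅

/-- A discrete vector field on `K`: a set of pairs `(α, β)` of simplices of `K`
with `α ⋖ β` such that each simplex belongs to at most one pair. -/
def IsDVF {V : Type*} (K : Set (Finset V)) (W : Set (Finset V × Finset V)) : Prop :=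
  (∀ p ∈ W, p.1 ∈ K ∧ p.2 ∈ K ∧ CodimOneFace p.1 p.2) ∧
  ∀ σ ∈ K, {p | p ∈ W ∧ (p.1 = σ ∨ p.2 = σ)}.Subsingleton

/-- The gradient vector field of a discrete Morse function `f` on `K`. -/
def gradVF {V : Type*} (K : Set (Finset V)) (f : Finset V → ℝ) :
    Set (Finset V × Finset V) :=
  {p | p.1 ∈ K ∧ p.2 ∈ K ∧ CodimOneFace p.1 p.2 ∧ f p.2 ≤ f p.1}

/-- A `V`-path `α_0, β_0, α_1, …, β_{r-1}, α_r` for a discrete vector field `W`. -/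
def IsVPath {V : Type*} (K : Set (Finset V)) (W : Set (Finset V × Finset V)) {r : ℕ}
    (a : Fin (r + 1) → Finset V) (b : Fin r → Finset V) : Prop :=
  (∀ i, a i ∈ K) ∧ (∀ i, b i ∈ K) ∧
  ∀ i : Fin r, (a i.castSucc, b i) ∈ W ∧ CodimOneFace (a i.succ) (b i) ∧
    a i.succ ≠ a i.castSucc

/-- `W` admits no nontrivial closed `V`-path. -/
def NoClosedVPath {V : Type*} (K : Set (Finset V))
    (W : Set (Finset V × Finset V)) : Prop :=
  ∀ r : ℕ, 0 < r → ∀ a : Fin (r + 1) → Finset V, ∀ b : Fin r → Finset V,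
    IsVPath K W a b → a (Fin.last r) ≠ a 0

/-- An elementary collapse: remove from the current complex a pair `(α, β)` with
`α ⋖ β` such that `β` is the unique simplex of the current complex properly
containing `α`. -/
def ElemCollapse {V : Type*} (K K' : Set (Finset V)) : Prop :=
  ∃ a b : Finset V, a ∈ K ∧ b ∈ K ∧ CodimOneFace a b ∧
    (∀ τ ∈ K, a ⊂ τ → τ = b) ∧ K' = K \ {a, b}

/-- One step of a path of the vector field `W`. -/
def VStep {V : Type*} (K : Set (Finset V)) (W : Set (Finset V × Finset V))
    (a c : Finset V) : Prop :=
  a ∈ K ∧ c ∈ K ∧ ∃ b ∈ K, (a, b) ∈ W ∧ CodimOneFace c b ∧ c ≠ a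

theorem vpath_of_transGen {V : Type*} (K : Set (Finset V)) (W : Set (Finset V × Finset V))
    (x y : Finset V) (h : Relation.TransGen (VStep K W) x y) :
    ∃ r : ℕ, 0 < r ∧ ∃ a : Fin (r + 1) → Finset V, ∃ b : Fin r → Finset V,
      IsVPath K W a b ∧ a 0 = x ∧ a (Fin.last r) = y := by
  induction h using Relation.TransGen.head_induction_on with
  | @single x h =>
    obtain ⟨hx, hy, b, hb, hw, hc, hne⟩ := h
    refine ⟨1, one_pos, ![x, y], ![b], ⟨?_, ?_, ?_⟩, rfl, rfl⟩
    · intro i; fin_cases i <;> assumption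
    · intro i; fin_cases i; assumption
    · intro i; fin_cases i; exact ⟨hw, hc, hne⟩
  | @head x z h _ ih =>
    obtain ⟨hx, hy, b, hb, hw, hc, hne⟩ := h
    obtain ⟨r, hr, p, q, ⟨h1, h2, h3⟩, h0, hl⟩ := ih
    refine ⟨r + 1, Nat.succ_pos _, Fin.cons x p, Fin.cons b q, ⟨?_, ?_, ?_⟩, rfl, ?_⟩
    · intro i
      refine Fin.cases ?_ (fun j => ?_) i
      · simpa using hx
      · simpa using h1 j
    · intro i
      refine Fin.cases ?_ (fun j => ?_) i
      · simpa using hb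
      · simpa using h2 j
    · intro i
      refine Fin.cases ?_ (fun j => ?_) i
      · simp only [Fin.castSucc_zero, Fin.cons_zero, Fin.cons_succ, h0]
        exact ⟨hw, hc, hne⟩
      · simp only [← Fin.succ_castSucc, Fin.cons_succ]
        exact h3 j
    · rw [← Fin.succ_last, Fin.cons_succ, hl]

/-- A nonempty gradient vector field whose critical simplices are a single vertex has a free pair. -/
theorem exists_free_pair {V : Type*} (K : Set (Finset V))
    (hK : IsComplex K) (hfin : K.Finite)
    (W : Set (Finset V × Finset V)) (hW : IsDVF K W) (hnc : NoClosedVPath K W)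
    (x : V) (hcrit : {σ | σ ∈ K ∧ ∀ p ∈ W, p.1 ≠ σ ∧ p.2 ≠ σ} = {({x} : Finset V)})
    (hne : W.Nonempty) :
    ∃ a b, (a, b) ∈ W ∧ ∀ τ ∈ K, a ⊂ τ → τ = b := by
  have hWfin : W.Finite := (hfin.prod hfin).subset fun p hp =>
    ⟨(hW.1 p hp).1, (hW.1 p hp).2.1⟩
  obtain ⟨p, hp, hmax⟩ := Set.exists_max_image W (fun p => p.2.card) hWfin hne
  set d := p.2.card with hd
  have key : ∀ σ ∈ K, σ ≠ {x} → ∃ q ∈ W, q.1 = σ ∨ q.2 = σ := by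
    intro σ hσ hx
    by_contra hcon
    have : σ ∈ ({({x} : Finset V)} : Set (Finset V)) := by
      rw [← hcrit]
      exact ⟨hσ, fun q hq => ⟨fun e => hcon ⟨q, hq, Or.inl e⟩, fun e => hcon ⟨q, hq, Or.inr e⟩⟩⟩
    exact hx this
  have apos : ∀ q ∈ W, 0 < q.1.card := fun q hq =>
    Finset.card_pos.2 (hK.1 _ (hW.1 q hq).1)
  have hpd : 2 ≤ d := by
    have := apos p hp
    have := (hW.1 p hp).2.2.2
    omega
  have hle : ∀ σ ∈ K, σ.card ≤ d := by
    intro σ hσ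
    by_cases hx : σ = {x}
    · subst hx; simp; omega
    · obtain ⟨q, hq, h | h⟩ := key σ hσ hx
      · have := hmax q hq
        have := (hW.1 q hq).2.2.2
        rw [← h]; omega
      · rw [← h]; exact hmax q hq
  have hirr : ∀ a, ¬ Relation.TransGen (VStep K W) a a := by
    intro a h
    obtain ⟨r, hr, f, g, hf, h0, hl⟩ := vpath_of_transGen K W a a h
    exact hnc r hr f g hf (hl.trans h0.symm)
  let S : Set (Finset V) := {a | ∃ b, (a, b) ∈ W ∧ b.card = d}
  have hSfin : S.Finite := hfin.subset fun a ⟨b, hb, _⟩ => (hW.1 _ hb).1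
  have : IsStrictOrder (Finset V) (Relation.TransGen (VStep K W)) :=
    { irrefl := hirr, trans := fun _ _ _ => Relation.TransGen.trans }
  have wf : S.WellFoundedOn (Relation.TransGen (VStep K W)) := hSfin.wellFoundedOn
  obtain ⟨⟨a, b, hab, hbd⟩, -, hmin⟩ := WellFounded.has_min wf Set.univ
    ⟨⟨p.1, p.2, hp, rfl⟩, trivial⟩
  refine ⟨a, b, hab, fun τ hτ hlt => ?_⟩
  by_contra hτb
  have hcard : b.card = a.card + 1 := (hW.1 _ hab).2.2.2
  have h1 := Finset.card_lt_card hlt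
  have h2 := hle τ hτ
  have hτd : τ.card = d := by omega
  obtain ⟨⟨aa, bb⟩, hq, h | h⟩ := key τ hτ (by rintro rfl; simp at hτd; omega)
  · simp only at h
    subst h
    have := (hW.1 _ hq).2.2.2
    have := hmax _ hq
    simp only at *
    omega
  · simp only at h
    subst h
    have hneq : a ≠ aa := by
      rintro rfl
      have := hW.2 a (hW.1 _ hab).1 ⟨hab, Or.inl rfl⟩ ⟨hq, Or.inl rfl⟩
      exact hτb (Prod.ext_iff.1 this).2.symm
    exact hmin ⟨aa, bb, hq, hτd⟩ trivial (Relation.TransGen.single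
      ⟨(hW.1 _ hq).1, (hW.1 _ hab).1, bb, hτ, hq, ⟨hlt.1, by show bb.card = a.card + 1; omega⟩, hneq⟩)

theorem collapse_aux {V : Type*} (x : V) (m : ℕ) : ∀ (K : Set (Finset V))
    (_ : IsComplex K) (_ : K.Finite) (_ : K.ncard = m)
    (W : Set (Finset V × Finset V)) (_ : IsDVF K W) (_ : NoClosedVPath K W)
    (_ : {σ | σ ∈ K ∧ ∀ p ∈ W, p.1 ≠ σ ∧ p.2 ≠ σ} = {({x} : Finset V)}),
    ∃ n : ℕ, ∃ L : Fin (n + 1) → Set (Finset V),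
      L 0 = K ∧
      (∀ i : Fin n, ElemCollapse (L i.castSucc) (L i.succ)) ∧
      L (Fin.last n) = {({x} : Finset V)} := by
  induction m using Nat.strong_induction_on with
  | _ m ih =>
  intro K hK hfin hm W hW hnc hcrit
  rcases W.eq_empty_or_nonempty with rfl | hne
  · refine ⟨0, fun _ => K, rfl, fun i => i.elim0, ?_⟩
    simpa using hcrit
  obtain ⟨a, b, hab, hfree⟩ := exists_free_pair K hK hfin W hW hnc x hcrit hne
  obtain ⟨haK, hbK, hcod⟩ := hW.1 _ hab
  simp only at haK hbK hcod
  have hss : a ⊂ b := by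
    refine hcod.1.ssubset_of_ne ?_
    rintro rfl
    have := hcod.2
    omega
  have huniq : ∀ p ∈ W, (p.1 = a ∨ p.2 = a ∨ p.1 = b ∨ p.2 = b) → p = (a, b) := by
    intro p hp h
    rcases h with h | h | h | h
    · exact hW.2 a haK ⟨hp, Or.inl h⟩ ⟨hab, Or.inl rfl⟩
    · exact hW.2 a haK ⟨hp, Or.inr h⟩ ⟨hab, Or.inl rfl⟩
    · exact hW.2 b hbK ⟨hp, Or.inl h⟩ ⟨hab, Or.inr rfl⟩
    · exact hW.2 b hbK ⟨hp, Or.inr h⟩ ⟨hab, Or.inr rfl⟩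
  have hsub : K \ {a, b} ⊆ K := Set.sdiff_subset
  obtain ⟨n, L, hL0, hLs, hLl⟩ := ih (K \ {a, b}).ncard
    (by
      rw [← hm]
      exact Set.ncard_lt_ncard ⟨hsub, fun h => (h haK).2 (by simp)⟩ hfin)
    (K \ {a, b})
    (by
      refine ⟨fun σ hσ => hK.1 σ hσ.1, fun σ hσ τ hτ hτn => ⟨hK.2 σ hσ.1 τ hτ hτn, ?_⟩⟩
      obtain ⟨hσK, hσ⟩ := hσ
      have ha : a ⊆ σ → False := by
        intro h
        rcases h.eq_or_ssubset with h | h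
        · exact hσ (by simp [h])
        · exact hσ (by simp [hfree σ hσK h])
      rintro (rfl | rfl)
      · exact ha hτ
      · exact ha (hss.1.trans hτ))
    (hfin.subset hsub) rfl (W \ {(a, b)})
    (by
      refine ⟨fun p hp => ?_, fun σ hσ p hp q hq =>
        hW.2 σ hσ.1 ⟨hp.1.1, hp.2⟩ ⟨hq.1.1, hq.2⟩⟩
      obtain ⟨h1, h2, h3⟩ := hW.1 p hp.1
      have hn := fun h => hp.2 (huniq p hp.1 h)
      refine ⟨⟨h1, ?_⟩, ⟨h2, ?_⟩, h3⟩
      · rintro (h | h)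
        · exact hn (Or.inl h)
        · exact hn (Or.inr (Or.inr (Or.inl h)))
      · rintro (h | h)
        · exact hn (Or.inr (Or.inl h))
        · exact hn (Or.inr (Or.inr (Or.inr h))))
    (fun r hr f g hfg => hnc r hr f g
      ⟨fun i => (hfg.1 i).1, fun i => (hfg.2.1 i).1, fun i =>
        ⟨(hfg.2.2 i).1.1, (hfg.2.2 i).2⟩⟩)
    (by
      rw [← hcrit]
      ext σ
      constructor
      · rintro ⟨⟨hσ, hσn⟩, h⟩
        refine ⟨hσ, fun p hp => ?_⟩
        by_cases hpe : p = (a, b)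
        · subst hpe
          exact ⟨fun e => hσn (by simp [← e]), fun e => hσn (by simp [← e])⟩
        · exact h p ⟨hp, hpe⟩
      · rintro ⟨hσ, h⟩
        refine ⟨⟨hσ, ?_⟩, fun p hp => h p hp.1⟩
        rintro (rfl | rfl)
        · exact (h _ hab).1 rfl
        · exact (h _ hab).2 rfl)
  refine ⟨n + 1, Fin.cons K L, rfl, ?_, ?_⟩
  · intro i
    refine Fin.cases ?_ (fun j => ?_) i
    · simp only [Fin.castSucc_zero, Fin.cons_zero, Fin.cons_succ, hL0]
      exact ⟨a, b, haK, hbK, hcod, hfree, rfl⟩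
    · simp only [← Fin.succ_castSucc, Fin.cons_succ]
      exact hLs j
  · rw [← Fin.succ_last, Fin.cons_succ, hLl]

/-- special case of Forman, Theorem 2.5: if a gradient vector field
on a finite complex `K` has exactly one critical simplex, a `0`-simplex, then `K`
collapses to that single vertex by a finite sequence of elementary collapses. -/
theorem collapsible_of_unique_critical_vertex {V : Type*} (K : Set (Finset V))
    (hK : IsComplex K) (hfin : K.Finite)
    (W : Set (Finset V × Finset V)) (hW : IsDVF K W) (hnc : NoClosedVPath K W)
    (hcrit : ∃ x : V, {σ | σ ∈ K ∧ ∀ p ∈ W, p.1 ≠ σ ∧ p.2 ≠ σ} =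
      {({x} : Finset V)}) :
    ∃ n : ℕ, ∃ L : Fin (n + 1) → Set (Finset V),
      L 0 = K ∧
      (∀ i : Fin n, ElemCollapse (L i.castSucc) (L i.succ)) ∧
      ∃ x : V, L (Fin.last n) = {({x} : Finset V)} := by
  obtain ⟨x, hx⟩ := hcrit
  obtain ⟨n, L, h0, hs, hl⟩ := collapse_aux x _ K hK hfin rfl W hW hnc hx
  exact ⟨n, L, h0, hs, x, hl⟩
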